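/- arXiv:0710.3584 — 3 statements merged into one kernel-verified Lean document; each statement's English description precedes it below -/
import Mathlib

section
/- Let β = 5 + 2√7, the Pisot root of X² − 10X − 3 (so that N(β) = −3). Then γ(β) = (7 − √7)/12; that is, sSup { v ∈ [0,1] : every rational x with 0 < x ≤ v whose reduced denominator is coprime to 3 satisfies T_β^ℓ(x) = x for some ℓ ≥ 1 } = (7 − √7)/12. -/
noncomputable section

/-- The β-transformation `x ↦ fract (β x)`. -/
def betaMap (β : ℝ) : ℝ → ℝ := fun x => Int.fract (β * x)

/-!
Let `-c` be the conjugate of `β`, where `β ^ 2 = a * β + b` with `1 ≤ b ≤ a`. Along the orbit of a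
point of `ℤ[β] / q`, the conjugates contract by `c` towards the natural extension domain, whose
fibres are `[conjMin, conjMax]` over `[0, c)` and `[conjMin + 1, conjMax]` over `[c, 1)`.
If `q` is coprime to `b`, then `β` is invertible modulo `q`, so every class of `ℤ[β] / q` modulo
`ℤ[β]` contains, for each `n`, the `n`-th iterate of a point of one fixed finite set. When the
class is that of a nonnegative rational `x` below `gammaBound`, the point `x` is the only one near
the domain; hence `x` is this iterate for all large `n`, and finiteness makes it periodic.

For the converse, put `r = b - 1` and `s = a - b + 1` and suppose that a periodic `x` is β-adically
close to `-(r + s β) / (1 - β ^ 2)`; as `a` and `b` are coprime, the integers are β-adically dense,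
so there are such rationals `x` in every interval. As long as the conjugate exceeds `gammaBound`,
the last two digits leading to the point are `s` and `r`: the congruence determines them modulo `b`
and the position of the conjugate does the rest. Two steps backwards multiply the distance of the
conjugate to `gammaBound` by `c ^ (-2)`, so a rational which is its own conjugate has to be close
to `gammaBound` in the first place.
-/

open Filter Function
open scoped QuadraticAlgebra

/-! ### Periodic points and integers in residue classes -/

theorem mem_periodicPts_of_eventually_mem_finite {α : Type*} {f : α → α} {x : α} {S : Set α}
    (hS : S.Finite) (h : ∀ᶠ n in atTop, ∃ w ∈ S, f^[n] w = x) : x ∈ periodicPts f := by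
  obtain ⟨n₀, hn₀⟩ := eventually_atTop.1 h
  choose w hwS hw using fun n => hn₀ (n₀ + n) (Nat.le_add_right n₀ n)
  obtain ⟨i, j, hij, hwij⟩ := hS.exists_lt_map_eq_of_forall_mem hwS
  refine mk_mem_periodicPts (Nat.sub_pos_of_lt hij) ?_
  calc f^[j - i] x = f^[j - i] (f^[n₀ + i] (w j)) := by rw [← hwij, hw]
    _ = f^[n₀ + j] (w j) := by
      rw [← iterate_add_apply, show j - i + (n₀ + i) = n₀ + j by omega]
    _ = x := hw j

theorem mem_periodicPts_of_semiconj {α γ : Type*} {f : α → α} {g : γ → γ}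
    {φ : α → γ} (hφ : Injective φ) (h : Semiconj φ f g) {x : α} (hx : φ x ∈ periodicPts g) :
    x ∈ periodicPts f := by
  obtain ⟨n, hn, hper⟩ := hx
  exact mk_mem_periodicPts hn (hφ (((h.iterate_right n) x).trans hper))

theorem exists_modEq_mem_Ioo {m : ℤ} (hm : 0 < m) (r : ℤ) {s t : ℝ} (hst : s + m < t) :
    ∃ P : ℤ, P ≡ r [ZMOD m] ∧ (P : ℝ) ∈ Set.Ioo s t := by
  obtain ⟨k, hk, -⟩ := existsUnique_add_zsmul_mem_Ioc (Int.cast_pos.2 hm) (r : ℝ) s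
  refine ⟨r + k * m, by simp [Int.ModEq], ?_⟩
  rw [zsmul_eq_mul] at hk
  push_cast
  exact ⟨hk.1, hk.2.trans_lt hst⟩

/-! ### The order `ℤ[β]` modulo powers of `β` -/

theorem omega_dvd_iff {R : Type*} [CommRing R] {r s : R} {z : QuadraticAlgebra R r s} :
    ω ∣ z ↔ r ∣ z.re := by
  constructor
  · rintro ⟨w, rfl⟩
    exact ⟨w.im, by simp⟩
  · rintro ⟨t, ht⟩
    exact ⟨⟨z.im - s * t, t⟩, by ext <;> simp [ht]⟩

theorem isLeftRegular_omega {R : Type*} [CommRing R] {r s : R} (hr : IsLeftRegular r) :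
    IsLeftRegular (ω : QuadraticAlgebra R r s) := by
  intro z w hzw
  have him : z.im = w.im := hr (by simpa using congrArg QuadraticAlgebra.re hzw)
  have hre := congrArg QuadraticAlgebra.im hzw
  exact QuadraticAlgebra.ext (by simpa [him] using hre) him

theorem intCast_eq_omega_mul_omega_sub {a b : ℤ} :
    (b : QuadraticAlgebra ℤ b a) = ω * (ω - (a : QuadraticAlgebra ℤ b a)) := by
  ext <;> simp

theorem exists_omega_pow_dvd_sub_intCast {a b : ℤ} (hab : IsCoprime a b) (n : ℕ)
    (z : QuadraticAlgebra ℤ b a) : ∃ s : ℤ, ω ^ n ∣ z - (s : QuadraticAlgebra ℤ b a) := by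
  obtain ⟨e, f, hef⟩ := hab
  -- The integer `-e b` equals `ω κ` with `κ ≡ 1` modulo `ω`, so its powers replace those of `ω`.
  obtain ⟨κ, hκ, hκ_one⟩ : ∃ κ : QuadraticAlgebra ℤ b a,
      ((-e * b : ℤ) : QuadraticAlgebra ℤ b a) = ω * κ ∧ ω ∣ κ - 1 := by
    refine ⟨((-e : ℤ) : QuadraticAlgebra ℤ b a) * (ω - (a : QuadraticAlgebra ℤ b a)), ?_,
      omega_dvd_iff.2 ⟨-f, ?_⟩⟩
    · rw [Int.cast_mul, intCast_eq_omega_mul_omega_sub, mul_left_comm]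
    · calc _ = e * a - 1 := by simp
        _ = b * -f := by linarith
  induction n with
  | zero => exact ⟨0, by simp⟩
  | succ n ih =>
    obtain ⟨s, γ, hγ⟩ := ih
    obtain ⟨δ, hδ⟩ : ω ∣ γ - (γ.re : QuadraticAlgebra ℤ b a) := omega_dvd_iff.2 (by simp)
    obtain ⟨η, hη⟩ : ω ∣ κ ^ n - 1 := hκ_one.trans (by simpa using sub_dvd_pow_sub_pow κ 1 n)
    refine ⟨s + γ.re * (-e * b) ^ n, δ - γ.re * η, ?_⟩
    rw [Int.cast_add, Int.cast_mul, Int.cast_pow, hκ, mul_pow]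
    linear_combination hγ + ω ^ n * hδ - ω ^ n * (γ.re : QuadraticAlgebra ℤ b a) * hη

/-! ### Quadratic Pisot numbers of negative norm -/

/-- `β` is the dominant root of `X² - a X - b`, where `1 ≤ b ≤ a`, and `-c` is its conjugate.
These are the quadratic Pisot numbers of negative norm. -/
structure IsQuadraticPisot (a b : ℤ) (β c : ℝ) : Prop where
  sub_eq : β - c = a
  mul_eq : β * c = b
  conj_pos : 0 < c
  norm_pos : 0 < b
  norm_le_trace : b ≤ a

/-- The lower end `-a - a c² - a c⁴ - ⋯` of the interval attracting the conjugates of the points of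
a β-orbit: only every other digit pulls the conjugate downwards. -/
def conjMin (a : ℤ) (c : ℝ) : ℝ := -a / (1 - c ^ 2)

/-- The upper end `a c + a c³ + ⋯` of the interval attracting the conjugates of the points of
a β-orbit. -/
def conjMax (a : ℤ) (c : ℝ) : ℝ := a * c / (1 - c ^ 2)

/-- The value of `γ(β)`, provided that `a` and `b` are coprime and this number is nonnegative. -/
def gammaBound (b : ℤ) (c : ℝ) : ℝ := 1 - (b - 1) * c / (1 - c ^ 2)

namespace IsQuadraticPisot

variable {a b : ℤ} {β c : ℝ} (h : IsQuadraticPisot a b β c)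

include h

theorem one_le_norm : (1 : ℝ) ≤ b := by exact_mod_cast h.norm_pos

theorem norm_le_trace_real : (b : ℝ) ≤ a := by exact_mod_cast h.norm_le_trace

theorem pos : 0 < β :=
  pos_of_mul_pos_left (h.mul_eq ▸ one_pos.trans_le h.one_le_norm) h.conj_pos.le

theorem conj_lt_one : c < 1 := by
  have := h.norm_le_trace_real
  nlinarith [h.sub_eq, h.mul_eq, h.pos, h.conj_pos]

theorem one_sub_sq_pos : 0 < 1 - c ^ 2 := by
  nlinarith [h.conj_pos, h.conj_lt_one]

theorem one_add_conj_le : 1 + c ≤ β := by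
  linarith [h.sub_eq, h.one_le_norm, h.norm_le_trace_real]

theorem two_le_add_two_mul : 2 ≤ β + 2 * c := by
  nlinarith [h.mul_eq, h.one_le_norm, h.pos, h.conj_pos, sq_nonneg (β - 2 * c)]

omit h in
theorem neg_mul_conjMin : -c * conjMin a c = conjMax a c := by
  rw [conjMin, conjMax]; ring

theorem neg_mul_conjMax_sub : -c * conjMax a c - a = conjMin a c := by
  have := h.one_sub_sq_pos.ne'
  rw [conjMin, conjMax]
  field_simp
  ring

theorem conjMin_nonpos : conjMin a c ≤ 0 :=
  div_nonpos_of_nonpos_of_nonneg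
    (by linarith [h.one_le_norm, h.norm_le_trace_real]) h.one_sub_sq_pos.le

theorem conjMax_nonneg : 0 ≤ conjMax a c := by
  rw [← neg_mul_conjMin]
  nlinarith [h.conjMin_nonpos, h.conj_pos]

theorem conjMin_eq : conjMin a c = gammaBound b c - 1 - β := by
  have := h.one_sub_sq_pos.ne'
  rw [conjMin, gammaBound, ← h.sub_eq, ← h.mul_eq]
  field_simp
  ring

theorem gammaBound_eq : gammaBound b c = -(b - 1) + c * (a - b + 1 + c * gammaBound b c) := by
  have := h.one_sub_sq_pos.ne'
  rw [gammaBound, ← h.sub_eq, ← h.mul_eq]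
  field_simp
  ring

theorem gammaBound_le_one : gammaBound b c ≤ 1 := by
  have : 0 ≤ (b - 1) * c / (1 - c ^ 2) :=
    div_nonneg (mul_nonneg (sub_nonneg.2 h.one_le_norm) h.conj_pos.le) h.one_sub_sq_pos.le
  rw [gammaBound]
  linarith

theorem conjMax_add_gammaBound_lt : conjMax a c + gammaBound b c < β + c := by
  rw [conjMax, gammaBound, add_sub_left_comm, ← sub_div, ← lt_sub_iff_add_lt',
    div_lt_iff₀ h.one_sub_sq_pos, ← h.sub_eq, ← h.mul_eq]
  nlinarith [mul_le_mul_of_nonneg_right h.one_add_conj_le (sub_nonneg.2 h.conj_lt_one.le),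
    mul_pos (pow_pos h.conj_pos 2) (sub_pos.2 h.conj_lt_one)]

theorem conjMax_sub_gammaBound : conjMax a c - gammaBound b c = (b - 1) / (1 - c) := by
  have := h.one_sub_sq_pos.ne'
  have := (sub_pos.2 h.conj_lt_one).ne'
  have : 1 - c ^ 2 = (1 - c) * (1 + c) := by ring
  rw [conjMax, gammaBound, ← h.sub_eq, ← h.mul_eq]
  field_simp
  ring

end IsQuadraticPisot

/-! ### The β-transformation on `ℤ[β] / q` -/

section BetaStep

variable {a b : ℤ}

/-- The image of `z / q` under the map `ℚ(ω) → ℝ` sending `ω` to `t`. It is the point of `ℚ(β)`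
represented by the pair of `z` and `q` for `t = β`, and its conjugate for `t = -c`. -/
def evalDiv (t : ℝ) (q : ℤ) (z : QuadraticAlgebra ℤ b a) : ℝ := (z.re + z.im * t) / q

/-- The digit which `betaMap β` splits off from the point represented by `z / q`. -/
def betaDigit (β : ℝ) (q : ℤ) (z : QuadraticAlgebra ℤ b a) : ℤ := ⌊β * evalDiv β q z⌋

/-- The β-transformation on numerators of elements of `ℤ[β] / q`. -/
def betaStep (β : ℝ) (q : ℤ) (z : QuadraticAlgebra ℤ b a) : QuadraticAlgebra ℤ b a :=
  ω * z - ((q * betaDigit β q z : ℤ) : QuadraticAlgebra ℤ b a)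

theorem evalDiv_intCast (t : ℝ) (q p : ℤ) :
    evalDiv t q (p : QuadraticAlgebra ℤ b a) = p / q := by
  simp [evalDiv]

theorem evalDiv_add (t : ℝ) (q : ℤ) (z w : QuadraticAlgebra ℤ b a) :
    evalDiv t q (z + w) = evalDiv t q z + evalDiv t q w := by
  simp only [evalDiv, QuadraticAlgebra.re_add, QuadraticAlgebra.im_add, Int.cast_add]
  ring

theorem evalDiv_sub (t : ℝ) (q : ℤ) (z w : QuadraticAlgebra ℤ b a) :
    evalDiv t q (z - w) = evalDiv t q z - evalDiv t q w := by
  simp only [evalDiv, QuadraticAlgebra.re_sub, QuadraticAlgebra.im_sub, Int.cast_sub]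
  ring

theorem evalDiv_intCast_mul (t : ℝ) {q : ℤ} (hq : q ≠ 0) (w : QuadraticAlgebra ℤ b a) :
    evalDiv t q ((q : QuadraticAlgebra ℤ b a) * w) = w.re + w.im * t := by
  have : (q : ℝ) ≠ 0 := Int.cast_ne_zero.2 hq
  simp [evalDiv, mul_assoc, ← mul_add, this]

theorem evalDiv_omega_mul {t : ℝ} (ht : t ^ 2 = a * t + b) (q : ℤ)
    (z : QuadraticAlgebra ℤ b a) : evalDiv t q (ω * z) = t * evalDiv t q z := by
  have hre : (ω * z).re = b * z.im := by simp
  have him : (ω * z).im = z.re + a * z.im := by simp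
  rw [evalDiv, evalDiv, hre, him]
  push_cast
  linear_combination -z.im / q * ht

theorem evalDiv_omega_mul_sub {t : ℝ} (ht : t ^ 2 = a * t + b) {q : ℤ} (hq : q ≠ 0) (d : ℤ)
    (z : QuadraticAlgebra ℤ b a) :
    evalDiv t q (ω * z - ((q * d : ℤ) : QuadraticAlgebra ℤ b a)) = t * evalDiv t q z - d := by
  rw [evalDiv_sub, evalDiv_omega_mul ht, evalDiv_intCast, Int.cast_mul,
    mul_div_cancel_left₀ _ (Int.cast_ne_zero.2 hq)]

theorem evalDiv_sub_evalDiv (t t' : ℝ) (q : ℤ) (z : QuadraticAlgebra ℤ b a) :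
    evalDiv t q z - evalDiv t' q z = z.im / q * (t - t') := by
  rw [evalDiv, evalDiv]; ring

theorem semiconj_evalDiv_betaStep_betaMap {β : ℝ} (hβ : β ^ 2 = a * β + b) {q : ℤ} (hq : q ≠ 0) :
    Semiconj (evalDiv β q) (betaStep β q : QuadraticAlgebra ℤ b a → _) (betaMap β) := fun z => by
  rw [betaStep, evalDiv_omega_mul_sub hβ hq]; rfl

theorem dvd_betaStep_iterate_sub (β : ℝ) (q : ℤ) (z : QuadraticAlgebra ℤ b a) (n : ℕ) :
    (q : QuadraticAlgebra ℤ b a) ∣ (betaStep β q)^[n] z - ω ^ n * z := by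
  induction n with
  | zero => simp
  | succ n ih =>
    obtain ⟨w, hw⟩ := ih
    rw [iterate_succ_apply', betaStep]
    exact ⟨ω * w - (betaDigit β q ((betaStep β q)^[n] z) : QuadraticAlgebra ℤ b a), by
      push_cast; linear_combination ω * hw⟩

theorem evalDiv_mem_Ico_of_mem_periodicPts {β : ℝ} (hβ : β ^ 2 = a * β + b) {q : ℤ} (hq : q ≠ 0)
    {z : QuadraticAlgebra ℤ b a} (hz : z ∈ periodicPts (betaStep β q)) :
    evalDiv β q z ∈ Set.Ico 0 1 := by
  obtain ⟨w, rfl⟩ := periodicPts_subset_range hz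
  rw [semiconj_evalDiv_betaStep_betaMap hβ hq]
  exact ⟨Int.fract_nonneg _, Int.fract_lt_one _⟩

theorem isCoprime_intCast_omega_pow {q : ℤ} (hq : IsCoprime q b) (n : ℕ) :
    IsCoprime (q : QuadraticAlgebra ℤ b a) (ω ^ n) := by
  have hqb := hq.map (Int.castRingHom (QuadraticAlgebra ℤ b a))
  rw [eq_intCast, eq_intCast, intCast_eq_omega_mul_omega_sub (a := a)] at hqb
  exact hqb.of_mul_right_left.pow_right

theorem exists_evalDiv_mem_Ico_dvd_sub (t : ℝ) {q : ℤ} (hq : 0 < q) (z : QuadraticAlgebra ℤ b a) :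
    ∃ w : QuadraticAlgebra ℤ b a, (q : QuadraticAlgebra ℤ b a) ∣ w - z ∧
      evalDiv t q w ∈ Set.Ico 0 1 ∧ (w.im / q : ℝ) ∈ Set.Ico 0 1 := by
  have hq' : (0 : ℝ) < q := Int.cast_pos.2 hq
  set i := z.im % q
  set n := ⌊(z.re + i * t) / q⌋ with hn
  refine ⟨⟨z.re - q * n, i⟩, ⟨⟨-n, -(z.im / q)⟩, ?_⟩, ?_, ?_⟩
  · ext
    · simp
    · simpa [sub_eq_iff_eq_add', ← sub_eq_add_neg] using Int.emod_def z.im q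
  · have : evalDiv t q (⟨z.re - q * n, i⟩ : QuadraticAlgebra ℤ b a) =
        Int.fract ((z.re + i * t) / q) := by
      rw [evalDiv, Int.fract, ← hn]
      field_simp
      push_cast
      ring
    rw [this]
    exact ⟨Int.fract_nonneg _, Int.fract_lt_one _⟩
  · have h₀ : (0 : ℝ) ≤ i := by exact_mod_cast Int.emod_nonneg z.im hq.ne'
    have h₁ : (i : ℝ) < q := by exact_mod_cast Int.emod_lt_of_pos z.im hq
    exact ⟨div_nonneg h₀ hq'.le, (div_lt_one hq').2 h₁⟩

theorem finite_setOf_evalDiv_mem_Icc {t t' : ℝ} (htt' : t' < t) {q : ℤ} (hq : 0 < q)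
    {x y x' y' : ℝ} :
    {z : QuadraticAlgebra ℤ b a |
      evalDiv t q z ∈ Set.Icc x y ∧ evalDiv t' q z ∈ Set.Icc x' y'}.Finite := by
  have : (0 : ℝ) < q := Int.cast_pos.2 hq
  have htt : 0 < t - t' := sub_pos.2 htt'
  refine Set.Finite.of_finite_fibers QuadraticAlgebra.im ?_ fun n _ => ?_
  · refine (Set.finite_Icc ⌈(x - y') * q / (t - t')⌉ ⌊(y - x') * q / (t - t')⌋).subset ?_
    rintro _ ⟨z, ⟨hz, hz'⟩, rfl⟩
    have him : (z.im : ℝ) = (evalDiv t q z - evalDiv t' q z) * q / (t - t') := by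
      rw [evalDiv_sub_evalDiv]; field_simp
    refine ⟨Int.ceil_le.2 ?_, Int.le_floor.2 ?_⟩ <;> rw [him] <;> gcongr
    exacts [hz.1, hz'.2, hz.2, hz'.1]
  · refine ((Set.finite_Icc ⌈x * q - n * t⌉ ⌊y * q - n * t⌋).image (⟨·, n⟩)).subset ?_
    rintro z ⟨⟨hz, -⟩, rfl⟩
    have hre : (z.re : ℝ) = evalDiv t q z * q - z.im * t := by rw [evalDiv]; field_simp; ring
    refine ⟨z.re, ⟨Int.ceil_le.2 ?_, Int.le_floor.2 ?_⟩, rfl⟩ <;> rw [hre] <;> gcongr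
    exacts [hz.1, hz.2]

/-- `1 - β²` times the difference of `z` and `q (-r - s β - r β² - s β³ - ⋯)`, where the series
converges β-adically to the point with backward orbit along the digits `r, s, r, s, …`. -/
def excess (q r s : ℤ) (z : QuadraticAlgebra ℤ b a) : QuadraticAlgebra ℤ b a :=
  (1 - ω ^ 2) * z + ((q * r : ℤ) : QuadraticAlgebra ℤ b a) +
    ((q * s : ℤ) : QuadraticAlgebra ℤ b a) * ω

theorem excess_betaStep_of_betaDigit_eq {β : ℝ} {q r s : ℤ} {z : QuadraticAlgebra ℤ b a}
    (hd : betaDigit β q z = r) : excess q r s (betaStep β q z) = ω * excess q s r z := by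
  rw [excess, excess, betaStep, hd]
  push_cast
  ring

theorem dvd_betaDigit_sub_of_omega_dvd_excess_betaStep {β : ℝ} {q r s : ℤ} (hqb : IsCoprime q b)
    {z : QuadraticAlgebra ℤ b a} (hdvd : ω ∣ excess q r s (betaStep β q z)) :
    b ∣ betaDigit β q z - r := by
  have hcongr : ω ∣ excess q r s (betaStep β q z) -
      ((q * (r - betaDigit β q z) : ℤ) : QuadraticAlgebra ℤ b a) :=
    ⟨(1 - ω ^ 2) * z + ω * ((q * betaDigit β q z : ℤ) : QuadraticAlgebra ℤ b a) +
      ((q * s : ℤ) : QuadraticAlgebra ℤ b a), by rw [excess, betaStep]; push_cast; ring⟩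
  have hdvd' := (dvd_sub_right hdvd).1 hcongr
  rw [omega_dvd_iff, QuadraticAlgebra.re_intCast, Int.cast_id] at hdvd'
  rw [dvd_sub_comm]
  exact hqb.symm.dvd_of_dvd_mul_left hdvd'

theorem exists_intCast_omega_pow_dvd_excess (hab : IsCoprime a b) (q r s : ℤ) (n : ℕ) {l u : ℝ}
    (hlu : l + (b ^ n : ℤ) < u) (hb : 0 < b) :
    ∃ p : ℤ, (p : ℝ) ∈ Set.Ioo l u ∧ ω ^ n ∣ excess q r s (p : QuadraticAlgebra ℤ b a) := by
  obtain ⟨x, y, hxy⟩ : IsCoprime (1 - ω ^ 2 : QuadraticAlgebra ℤ b a) (ω ^ n) :=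
    IsCoprime.pow_right ⟨1, ω, by ring⟩
  set t : QuadraticAlgebra ℤ b a :=
    ((q * r : ℤ) : QuadraticAlgebra ℤ b a) + ((q * s : ℤ) : QuadraticAlgebra ℤ b a) * ω with ht
  obtain ⟨m, w, hw⟩ := exists_omega_pow_dvd_sub_intCast hab n (-x * t)
  obtain ⟨p, hpm, hp⟩ := exists_modEq_mem_Ioo (pow_pos hb n) m hlu
  obtain ⟨k, hk⟩ := hpm.symm.dvd
  have hk' : (p : QuadraticAlgebra ℤ b a) = (m : QuadraticAlgebra ℤ b a) +
      ω ^ n * (ω - (a : QuadraticAlgebra ℤ b a)) ^ n * (k : QuadraticAlgebra ℤ b a) := by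
    rw [← mul_pow, ← intCast_eq_omega_mul_omega_sub, sub_eq_iff_eq_add'.1 hk]
    push_cast
    rfl
  refine ⟨p, hp, (1 - ω ^ 2) * ((ω - (a : QuadraticAlgebra ℤ b a)) ^ n *
    (k : QuadraticAlgebra ℤ b a) - w) + y * t, ?_⟩
  rw [excess, add_assoc, ← ht]
  linear_combination (1 - ω ^ 2) * hk' - (1 - ω ^ 2) * hw - t * hxy

theorem evalDiv_excess {t : ℝ} (ht : t ^ 2 = a * t + b) {q : ℤ} (hq : q ≠ 0) (r s : ℤ)
    (z : QuadraticAlgebra ℤ b a) :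
    evalDiv t q (excess q r s z) = (1 - t ^ 2) * evalDiv t q z + (r + s * t) := by
  have hexcess : excess q r s z =
      z - ω * (ω * z) + ((q * r : ℤ) : QuadraticAlgebra ℤ b a) +
        ω * ((q * s : ℤ) : QuadraticAlgebra ℤ b a) := by
    rw [excess]; ring
  rw [hexcess, evalDiv_add, evalDiv_add, evalDiv_sub, evalDiv_omega_mul ht, evalDiv_omega_mul ht,
    evalDiv_omega_mul ht, evalDiv_intCast, evalDiv_intCast, Int.cast_mul, Int.cast_mul,
    mul_div_cancel_left₀ _ (Int.cast_ne_zero.2 hq), mul_div_cancel_left₀ _ (Int.cast_ne_zero.2 hq)]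
  ring

end BetaStep

/-- The `δ`-neighbourhood, in the direction of the conjugate, of the natural extension domain of
`betaMap β`, pulled back to numerators of elements of `ℤ[β] / q`. The domain has two parts since
only a digit less than `a` can be followed by a point of `[c, 1)`. -/
def natExtNhd {a b : ℤ} (β c : ℝ) (q : ℤ) (δ : ℝ) : Set (QuadraticAlgebra ℤ b a) :=
  {z | evalDiv β q z ∈ Set.Ico 0 1 ∧
    evalDiv (-c) q z ∈ Set.Icc (conjMin a c - δ) (conjMax a c + δ) ∧
    (c ≤ evalDiv β q z → conjMin a c + 1 - δ ≤ evalDiv (-c) q z)}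

namespace IsQuadraticPisot

variable {a b : ℤ} {β c : ℝ} (h : IsQuadraticPisot a b β c)

include h

theorem sq_eq : β ^ 2 = a * β + b := by
  rw [← h.sub_eq, ← h.mul_eq]; ring

theorem neg_conj_sq_eq : (-c) ^ 2 = a * -c + b := by
  rw [← h.sub_eq, ← h.mul_eq]; ring

theorem irrational : Irrational β := by
  have hint : IsIntegral ℤ β := by
    refine ⟨.X ^ 2 - (.C a * .X + .C b), by monicity!, ?_⟩
    simp [h.sq_eq, -eq_intCast]
  rintro ⟨r, hr⟩
  obtain ⟨k, hk⟩ := hint.exists_int_iff_exists_rat.1 ⟨r, hr.symm⟩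
  have hlt : (a : ℝ) < k := by linarith [h.sub_eq, h.conj_pos]
  have hgt : (k : ℝ) < a + 1 := by linarith [h.sub_eq, h.conj_lt_one]
  norm_cast at hlt hgt
  omega

theorem evalDiv_injective {q : ℤ} (hq : q ≠ 0) :
    Injective (evalDiv β q : QuadraticAlgebra ℤ b a → ℝ) := by
  intro z w hzw
  have hzw' : ((z.re - w.re : ℤ) : ℝ) + (z.im - w.im : ℤ) * β = 0 := by
    have := (div_left_inj' (Int.cast_ne_zero.2 hq)).1 hzw
    push_cast
    linarith
  have him : z.im - w.im = 0 := by
    by_contra hne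
    refine (irrational_iff_ne_rational β).1 h.irrational (-(z.re - w.re)) (z.im - w.im) hne ?_
    rw [eq_div_iff (Int.cast_ne_zero.2 hne)]
    push_cast at hzw' ⊢
    linarith
  have hre : z.re - w.re = 0 := by
    rw [him, Int.cast_zero, zero_mul, add_zero] at hzw'
    exact_mod_cast hzw'
  exact QuadraticAlgebra.ext (sub_eq_zero.1 hre) (sub_eq_zero.1 him)

theorem betaDigit_mem_Icc {q : ℤ} {z : QuadraticAlgebra ℤ b a} (hz : evalDiv β q z ∈ Set.Ico 0 1) :
    betaDigit β q z ∈ Set.Icc 0 a := by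
  refine ⟨Int.floor_nonneg.2 (mul_nonneg h.pos.le hz.1), Int.lt_add_one_iff.1 ?_⟩
  rw [betaDigit, Int.floor_lt]
  push_cast
  nlinarith [hz.2, h.sub_eq, h.conj_lt_one, h.pos]

theorem betaDigit_lt_of_conj_le_betaStep {q : ℤ} (hq : q ≠ 0) {z : QuadraticAlgebra ℤ b a}
    (hz : evalDiv β q z < 1) (hc : c ≤ evalDiv β q (betaStep β q z)) : betaDigit β q z < a := by
  rw [betaStep, evalDiv_omega_mul_sub h.sq_eq hq] at hc
  have : (betaDigit β q z : ℝ) < a := by nlinarith [h.sub_eq, h.pos]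
  exact_mod_cast this

theorem betaStep_mem_natExtNhd {q : ℤ} (hq : q ≠ 0) {δ : ℝ} {z : QuadraticAlgebra ℤ b a}
    (hz : z ∈ natExtNhd β c q δ) : betaStep β q z ∈ natExtNhd β c q (c * δ) := by
  obtain ⟨hval, hconj, -⟩ := hz
  have hlo := mul_le_mul_of_nonneg_left hconj.1 h.conj_pos.le
  have hhi := mul_le_mul_of_nonneg_left hconj.2 h.conj_pos.le
  have hstep : evalDiv (-c) q (betaStep β q z) = -c * evalDiv (-c) q z - betaDigit β q z :=
    evalDiv_omega_mul_sub h.neg_conj_sq_eq hq _ z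
  have hd := h.betaDigit_mem_Icc hval
  have hd₀ : (0 : ℝ) ≤ betaDigit β q z := by exact_mod_cast hd.1
  have hda : (betaDigit β q z : ℝ) ≤ a := by exact_mod_cast hd.2
  have hmin := h.neg_mul_conjMax_sub
  have hmax := neg_mul_conjMin (a := a) (c := c)
  refine ⟨?_, ⟨by linarith, by linarith⟩, fun hc => ?_⟩
  · rw [semiconj_evalDiv_betaStep_betaMap h.sq_eq hq]
    exact ⟨Int.fract_nonneg _, Int.fract_lt_one _⟩
  · have : (betaDigit β q z : ℝ) + 1 ≤ a := by
      exact_mod_cast h.betaDigit_lt_of_conj_le_betaStep hq hval.2 hc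
    linarith

theorem betaStep_iterate_mem_natExtNhd {q : ℤ} (hq : q ≠ 0) {δ : ℝ} {z : QuadraticAlgebra ℤ b a}
    (hz : z ∈ natExtNhd β c q δ) (n : ℕ) : (betaStep β q)^[n] z ∈ natExtNhd β c q (c ^ n * δ) := by
  induction n with
  | zero => simpa using hz
  | succ n ih =>
    rw [iterate_succ_apply', pow_succ', mul_assoc]
    exact h.betaStep_mem_natExtNhd hq ih

theorem mem_natExtNhd_of_abs_add_one_le {q : ℤ} {δ : ℝ} {z : QuadraticAlgebra ℤ b a}
    (hval : evalDiv β q z ∈ Set.Ico 0 1) (hconj : |evalDiv (-c) q z| + 1 ≤ δ) :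
    z ∈ natExtNhd β c q δ := by
  have := h.conjMin_nonpos
  have := h.conjMax_nonneg
  have := neg_abs_le (evalDiv (-c) q z)
  have := le_abs_self (evalDiv (-c) q z)
  exact ⟨hval, ⟨by linarith, by linarith⟩, fun _ => by linarith⟩

theorem finite_natExtNhd {q : ℤ} (hq : 0 < q) (δ : ℝ) :
    (natExtNhd β c q δ : Set (QuadraticAlgebra ℤ b a)).Finite :=
  (finite_setOf_evalDiv_mem_Icc (by linarith [h.pos, h.conj_pos]) hq).subset
    fun _ hz => ⟨Set.Ico_subset_Icc_self hz.1, hz.2.1⟩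

/-! ### Pure periodicity below the bound -/

theorem exists_mem_natExtNhd_dvd_sub {q : ℤ} (hq : 0 < q) (z : QuadraticAlgebra ℤ b a) :
    ∃ w ∈ natExtNhd β c q (β + c + 2), (q : QuadraticAlgebra ℤ b a) ∣ w - z := by
  obtain ⟨w, hwz, hval, him⟩ := exists_evalDiv_mem_Ico_dvd_sub β hq z
  have hβc : 0 < β + c := add_pos h.pos h.conj_pos
  refine ⟨w, h.mem_natExtNhd_of_abs_add_one_le hval ?_, hwz⟩
  suffices |evalDiv (-c) q w| ≤ β + c + 1 by linarith
  have hconj := evalDiv_sub_evalDiv β (-c) q w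
  have h₀ := mul_nonneg him.1 hβc.le
  have h₁ := mul_le_of_le_one_left hβc.le him.2.le
  exact abs_le.2 ⟨by linarith [hval.1], by linarith [hval.2]⟩

theorem exists_mem_natExtNhd_dvd_betaStep_iterate_sub {q : ℤ} (hq : 0 < q) (hqb : IsCoprime q b)
    (z : QuadraticAlgebra ℤ b a) (n : ℕ) :
    ∃ w ∈ natExtNhd β c q (β + c + 2), (q : QuadraticAlgebra ℤ b a) ∣ (betaStep β q)^[n] w - z := by
  obtain ⟨s, t, hst⟩ := isCoprime_intCast_omega_pow (a := a) hqb n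
  obtain ⟨w, hw, r, hr⟩ := h.exists_mem_natExtNhd_dvd_sub hq (t * z)
  obtain ⟨k, hk⟩ := dvd_betaStep_iterate_sub β q w n
  exact ⟨w, hw, k + ω ^ n * r - s * z, by linear_combination hk + ω ^ n * hr + z * hst⟩

theorem coeff_eq_zero {x δ : ℝ} (hx : 0 ≤ x) (hxδ : x + δ < gammaBound b c) {m k : ℤ}
    (hval : x + m + k * β ∈ Set.Ico 0 1)
    (hconj : x + m + k * -c ∈ Set.Icc (conjMin a c - δ) (conjMax a c + δ))
    (hcusp : c ≤ x + m + k * β → conjMin a c + 1 - δ ≤ x + m + k * -c) : k = 0 := by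
  have hβc : 0 < β + c := add_pos h.pos h.conj_pos
  have hmin := h.conjMin_eq
  rcases lt_trichotomy k 0 with hk | hk | hk
  · have : (k : ℝ) ≤ -1 := by exact_mod_cast Int.le_sub_one_of_lt hk
    nlinarith [hval.1, hconj.2, h.conjMax_add_gammaBound_lt]
  · exact hk
  · exfalso
    obtain rfl | hk : k = 1 ∨ 2 ≤ k := by omega
    · rw [Int.cast_one, one_mul] at hval hcusp hconj
      have := h.gammaBound_le_one
      have := h.conj_lt_one
      have hβ := h.sub_eq
      rcases lt_or_ge (x + m + β) c with hlt | hge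
      · have : (m + a : ℝ) ≤ -1 := by
          have : m + a < 0 := by exact_mod_cast (by linarith : (m + a : ℝ) < 0)
          exact_mod_cast (by omega : m + a ≤ -1)
        linarith [hconj.1]
      · have : (m + a : ℝ) ≤ 0 := by
          have : m + a < 1 := by
            exact_mod_cast (by linarith [hval.2, h.conj_pos] : (m + a : ℝ) < 1)
          exact_mod_cast (by omega : m + a ≤ 0)
        linarith [hcusp hge]
    · have : (2 : ℝ) ≤ k := by exact_mod_cast hk
      nlinarith [hval.2, hconj.1, h.two_le_add_two_mul]

theorem eq_intCast_of_mem_natExtNhd {q p : ℤ} (hq : 0 < q) {δ : ℝ} (hp : 0 ≤ p)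
    (hδ : p / q + δ < gammaBound b c) (hδ₀ : 0 ≤ δ) {z : QuadraticAlgebra ℤ b a}
    (hz : z ∈ natExtNhd β c q δ)
    (hzp : (q : QuadraticAlgebra ℤ b a) ∣ z - (p : QuadraticAlgebra ℤ b a)) : z = p := by
  obtain ⟨w, hw⟩ := hzp
  obtain rfl := sub_eq_iff_eq_add'.1 hw
  obtain ⟨hval, hconj, hcusp⟩ := hz
  simp only [evalDiv_add, evalDiv_intCast, evalDiv_intCast_mul _ hq.ne',
    ← add_assoc] at hval hconj hcusp
  have hx : (0 : ℝ) ≤ p / q := div_nonneg (Int.cast_nonneg hp) (Int.cast_nonneg hq.le)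
  have him : w.im = 0 := h.coeff_eq_zero hx hδ hval hconj hcusp
  have hre : w.re = 0 := by
    rw [him, Int.cast_zero, zero_mul, add_zero] at hval
    have h₀ : (-1 : ℝ) < w.re := by linarith [h.gammaBound_le_one, hval.1]
    have h₁ : (w.re : ℝ) < 1 := by linarith [hval.2]
    norm_cast at h₀ h₁
    omega
  rw [QuadraticAlgebra.ext (x := w) (y := 0) hre him, mul_zero, add_zero]

theorem intCast_mem_periodicPts_betaStep {q p : ℤ} (hq : 0 < q) (hqb : IsCoprime q b) (hp : 0 ≤ p)
    (hpq : (p / q : ℝ) < gammaBound b c) :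
    (p : QuadraticAlgebra ℤ b a) ∈ periodicPts (betaStep β q) := by
  have hlim : Tendsto (fun n => (p / q + c ^ n * (β + c + 2) : ℝ)) atTop (nhds (p / q)) := by
    simpa using ((tendsto_pow_atTop_nhds_zero_of_lt_one h.conj_pos.le
      h.conj_lt_one).mul_const _).const_add (p / q : ℝ)
  refine mem_periodicPts_of_eventually_mem_finite (h.finite_natExtNhd hq (β + c + 2)) ?_
  filter_upwards [hlim.eventually_lt_const hpq] with n hn
  obtain ⟨w, hw, hwp⟩ :=
    h.exists_mem_natExtNhd_dvd_betaStep_iterate_sub hq hqb (p : QuadraticAlgebra ℤ b a) n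
  refine ⟨w, hw, h.eq_intCast_of_mem_natExtNhd hq hp hn ?_
    (h.betaStep_iterate_mem_natExtNhd hq.ne' hw n) hwp⟩
  have := h.pos
  have := h.conj_pos
  positivity

theorem ratCast_mem_periodicPts {x : ℚ} (hx₀ : 0 ≤ x) (hx : (x : ℝ) < gammaBound b c)
    (hxb : IsCoprime (x.den : ℤ) b) : (x : ℝ) ∈ periodicPts (betaMap β) := by
  have hden : (0 : ℤ) < x.den := by exact_mod_cast x.den_pos
  have hcast : (x : ℝ) = x.num / (x.den : ℤ) := by exact_mod_cast (Rat.num_div_den x).symm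
  have hper := h.intCast_mem_periodicPts_betaStep hden hxb (Rat.num_nonneg.2 hx₀) (hcast ▸ hx)
  rw [hcast, ← evalDiv_intCast (a := a) (b := b) β]
  exact (semiconj_evalDiv_betaStep_betaMap h.sq_eq hden.ne').mapsTo_periodicPts hper

/-! ### Periodic points above the bound -/

theorem conj_mem_Icc_of_mem_periodicPts {q : ℤ} (hq : q ≠ 0) {z : QuadraticAlgebra ℤ b a}
    (hz : z ∈ periodicPts (betaStep β q)) :
    evalDiv (-c) q z ∈ Set.Icc (conjMin a c) (conjMax a c) := by
  obtain ⟨n, hn, hper⟩ := hz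
  have hval := evalDiv_mem_Ico_of_mem_periodicPts h.sq_eq hq ⟨n, hn, hper⟩
  set δ := |evalDiv (-c) q z| + 1
  have hmem (k : ℕ) : z ∈ natExtNhd β c q ((c ^ n) ^ k * δ) := by
    have hk := h.betaStep_iterate_mem_natExtNhd hq
      (h.mem_natExtNhd_of_abs_add_one_le hval le_rfl) (n * k)
    rwa [(hper.mul_const k).eq, pow_mul] at hk
  have hlim : Tendsto (fun k => (c ^ n) ^ k * δ) atTop (nhds 0) := by
    simpa using (tendsto_pow_atTop_nhds_zero_of_lt_one (pow_nonneg h.conj_pos.le n)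
      (pow_lt_one₀ h.conj_pos.le h.conj_lt_one hn.ne')).mul_const δ
  constructor
  · simpa using le_of_tendsto' (hlim.const_sub (conjMin a c)) fun k => (hmem k).2.1.1
  · simpa using ge_of_tendsto' (hlim.const_add (conjMax a c)) fun k => (hmem k).2.1.2

theorem isLeftRegular_norm : IsLeftRegular b :=
  mul_right_injective₀ h.norm_pos.ne'

theorem evalDiv_conj_excess {q : ℤ} (hq : q ≠ 0) (z : QuadraticAlgebra ℤ b a) :
    evalDiv (-c) q (excess q (b - 1) (a - b + 1) z) =
      (1 - c ^ 2) * (evalDiv (-c) q z - gammaBound b c) := by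
  rw [evalDiv_excess h.neg_conj_sq_eq hq]
  push_cast
  linear_combination h.gammaBound_eq

theorem conjMax_sub_gammaBound_nonneg : 0 ≤ conjMax a c - gammaBound b c := by
  rw [h.conjMax_sub_gammaBound]
  exact div_nonneg (sub_nonneg.2 h.one_le_norm) (sub_nonneg.2 h.conj_lt_one.le)

theorem two_mul_sub_one_mul_conj_le (hba : 2 * b - 1 ≤ a) : (2 * b - 1) * c ≤ b := by
  have hba' : (2 * b - 1 : ℝ) ≤ a := by exact_mod_cast hba
  calc (2 * b - 1) * c ≤ β * c :=
        mul_le_mul_of_nonneg_right (by linarith [h.sub_eq, h.conj_pos]) h.conj_pos.le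
    _ = b := h.mul_eq

theorem betaDigit_lt_two_mul_sub_one {q : ℤ} (hq : q ≠ 0) {z : QuadraticAlgebra ℤ b a}
    (hz : z ∈ periodicPts (betaStep β q))
    (hu : gammaBound b c < evalDiv (-c) q (betaStep β q z)) : betaDigit β q z < 2 * b - 1 := by
  have hd := h.betaDigit_mem_Icc (evalDiv_mem_Ico_of_mem_periodicPts h.sq_eq hq hz)
  obtain hba | hba := lt_or_ge a (2 * b - 1)
  · exact hd.2.trans_lt hba
  have hgap : conjMax a c - gammaBound b c ≤ 2 * b - 1 := by
    rw [h.conjMax_sub_gammaBound, div_le_iff₀ (sub_pos.2 h.conj_lt_one)]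
    linarith [h.two_mul_sub_one_mul_conj_le hba]
  have hconj := mul_le_mul_of_nonneg_left (h.conj_mem_Icc_of_mem_periodicPts hq hz).1 h.conj_pos.le
  rw [betaStep, evalDiv_omega_mul_sub h.neg_conj_sq_eq hq] at hu
  have : (betaDigit β q z : ℝ) < 2 * b - 1 := by linarith [neg_mul_conjMin (a := a) (c := c)]
  exact_mod_cast this

theorem lt_betaDigit_of_conj_betaStep_lt {q : ℤ} (hq : q ≠ 0) {z : QuadraticAlgebra ℤ b a}
    (hz : z ∈ periodicPts (betaStep β q))
    (hu : c * evalDiv (-c) q (betaStep β q z) < -(b - 1) - gammaBound b c) :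
    a - 2 * b + 1 < betaDigit β q z := by
  have hd := h.betaDigit_mem_Icc (evalDiv_mem_Ico_of_mem_periodicPts h.sq_eq hq hz)
  obtain hba | hba := lt_or_ge a (2 * b - 1)
  · linarith [hd.1]
  have hgap : c * (conjMax a c - gammaBound b c) ≤ b := by
    rw [h.conjMax_sub_gammaBound, ← mul_div_assoc, div_le_iff₀ (sub_pos.2 h.conj_lt_one)]
    linarith [h.two_mul_sub_one_mul_conj_le hba]
  have hconj := mul_le_mul_of_nonneg_left (h.conj_mem_Icc_of_mem_periodicPts hq hz).2 h.conj_pos.le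
  rw [betaStep, evalDiv_omega_mul_sub h.neg_conj_sq_eq hq] at hu
  have : (a - 2 * b + 1 : ℝ) < betaDigit β q z := by
    refine lt_of_mul_lt_mul_left ?_ h.conj_pos.le
    linarith [h.gammaBound_eq, mul_le_mul_of_nonneg_left hgap h.conj_pos.le,
      mul_le_mul_of_nonneg_left hconj h.conj_pos.le]
  exact_mod_cast this

theorem exists_excess_eq_omega_sq_mul {q : ℤ} (hq : q ≠ 0) (hqb : IsCoprime q b)
    {z : QuadraticAlgebra ℤ b a} (hz : z ∈ periodicPts (betaStep β q))
    (hu : gammaBound b c < evalDiv (-c) q z)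
    (hdvd : ω ^ 2 ∣ excess q (b - 1) (a - b + 1) z) :
    ∃ w ∈ periodicPts (betaStep β q),
      excess q (b - 1) (a - b + 1) z = ω ^ 2 * excess q (b - 1) (a - b + 1) w := by
  obtain ⟨z₁, hz₁, rfl⟩ := (bijOn_periodicPts (betaStep β q)).surjOn hz
  obtain ⟨z₂, hz₂, rfl⟩ := (bijOn_periodicPts (betaStep β q)).surjOn hz₁
  have hd₁ : betaDigit β q (betaStep β q z₂) = b - 1 := by
    have hmem := h.betaDigit_mem_Icc (evalDiv_mem_Ico_of_mem_periodicPts h.sq_eq hq hz₁)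
    have hlt := h.betaDigit_lt_two_mul_sub_one hq hz₁ hu
    refine sub_eq_zero.1 (Int.eq_zero_of_abs_lt_dvd
      (dvd_betaDigit_sub_of_omega_dvd_excess_betaStep hqb
        ((dvd_pow_self _ two_ne_zero).trans hdvd)) (abs_lt.2 ?_))
    constructor <;> linarith [hmem.1]
  rw [excess_betaStep_of_betaDigit_eq hd₁] at hdvd ⊢
  rw [pow_two, (isLeftRegular_omega h.isLeftRegular_norm).dvd_cancel_left] at hdvd
  have hd₂ : betaDigit β q z₂ = a - b + 1 := by
    have hmem := h.betaDigit_mem_Icc (evalDiv_mem_Ico_of_mem_periodicPts h.sq_eq hq hz₂)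
    have hgt := h.lt_betaDigit_of_conj_betaStep_lt hq hz₂ (by
      rw [betaStep, evalDiv_omega_mul_sub h.neg_conj_sq_eq hq, hd₁] at hu
      push_cast at hu
      linarith)
    refine sub_eq_zero.1 (Int.eq_zero_of_abs_lt_dvd
      (dvd_betaDigit_sub_of_omega_dvd_excess_betaStep hqb hdvd) (abs_lt.2 ?_))
    constructor <;> linarith [hmem.2]
  exact ⟨z₂, hz₂, by rw [excess_betaStep_of_betaDigit_eq hd₂, pow_two, mul_assoc]⟩

theorem conj_sub_gammaBound_le {q : ℤ} (hq : q ≠ 0) (hqb : IsCoprime q b) (n : ℕ)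
    {z : QuadraticAlgebra ℤ b a} (hz : z ∈ periodicPts (betaStep β q))
    (hdvd : (ω ^ 2) ^ n ∣ excess q (b - 1) (a - b + 1) z) :
    evalDiv (-c) q z - gammaBound b c ≤ (c ^ 2) ^ n * (conjMax a c - gammaBound b c) := by
  induction n generalizing z with
  | zero => simpa using (h.conj_mem_Icc_of_mem_periodicPts hq hz).2
  | succ n ih =>
    obtain hle | hu := le_or_gt (evalDiv (-c) q z) (gammaBound b c)
    · have := h.conjMax_sub_gammaBound_nonneg
      exact (sub_nonpos.2 hle).trans (by positivity)
    rw [pow_succ'] at hdvd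
    obtain ⟨w, hw, hzw⟩ :=
      h.exists_excess_eq_omega_sq_mul hq hqb hz hu ((dvd_mul_right _ _).trans hdvd)
    rw [hzw, ((isLeftRegular_omega h.isLeftRegular_norm).pow 2).dvd_cancel_left] at hdvd
    have hconj : evalDiv (-c) q z - gammaBound b c =
        c ^ 2 * (evalDiv (-c) q w - gammaBound b c) := by
      refine mul_left_cancel₀ h.one_sub_sq_pos.ne' ?_
      rw [← h.evalDiv_conj_excess hq, hzw, pow_two, mul_assoc,
        evalDiv_omega_mul h.neg_conj_sq_eq, evalDiv_omega_mul h.neg_conj_sq_eq,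
        h.evalDiv_conj_excess hq]
      ring
    calc evalDiv (-c) q z - gammaBound b c = c ^ 2 * (evalDiv (-c) q w - gammaBound b c) := hconj
      _ ≤ c ^ 2 * ((c ^ 2) ^ n * (conjMax a c - gammaBound b c)) :=
        mul_le_mul_of_nonneg_left (ih hw hdvd) (sq_nonneg c)
      _ = (c ^ 2) ^ (n + 1) * (conjMax a c - gammaBound b c) := by ring

theorem exists_ratCast_notMem_periodicPts (hab : IsCoprime a b) {v : ℝ} (hv₀ : 0 < v)
    (hv : gammaBound b c < v) :
    ∃ x : ℚ, 0 < x ∧ (x : ℝ) ≤ v ∧ IsCoprime (x.den : ℤ) b ∧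
      (x : ℝ) ∉ periodicPts (betaMap β) := by
  have hlim : Tendsto (fun n => gammaBound b c + (c ^ 2) ^ n * (conjMax a c - gammaBound b c))
      atTop (nhds (gammaBound b c)) := by
    simpa using ((tendsto_pow_atTop_nhds_zero_of_lt_one (sq_nonneg c)
      (by linarith [h.one_sub_sq_pos])).mul_const _).const_add (gammaBound b c)
  obtain ⟨n, hn⟩ := (hlim.eventually_lt_const hv).exists
  set l := max 0 (gammaBound b c + (c ^ 2) ^ n * (conjMax a c - gammaBound b c))
  have hlv : 0 < v - l := sub_pos.2 (max_lt hv₀ hn)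
  obtain ⟨k, hk⟩ := pow_unbounded_of_one_lt ((b ^ (2 * n) : ℤ) / (v - l))
    (by linarith [h.one_le_norm] : (1 : ℝ) < b + 1)
  set q : ℤ := (b + 1) ^ k with hq_def
  have hq : 0 < q := pow_pos (by linarith [h.norm_pos]) k
  have hq' : (0 : ℝ) < q := Int.cast_pos.2 hq
  have hqb : IsCoprime q b := IsCoprime.pow_left ⟨1, -1, by ring⟩
  obtain ⟨p, hp, hdvd⟩ := exists_intCast_omega_pow_dvd_excess hab q (b - 1) (a - b + 1) (2 * n)
    (l := q * l) (u := q * v) (by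
      rw [div_lt_iff₀ hlv] at hk
      rw [hq_def]
      push_cast at hk ⊢
      linarith) h.norm_pos
  have hlt : l < p / q := (lt_div_iff₀' hq').2 hp.1
  have hcast : ((p / q : ℚ) : ℝ) = p / q := by push_cast; rfl
  refine ⟨p / q, ?_, ?_, ?_, fun hper => ?_⟩
  · rw [← Rat.cast_pos (K := ℝ), hcast]
    exact (le_max_left _ _).trans_lt hlt
  · rw [hcast]
    exact ((div_lt_iff₀' hq').2 hp.2).le
  · exact hqb.of_isCoprime_of_dvd_left (Rat.divInt_eq_div p q ▸ Rat.den_dvd p q)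
  · rw [hcast, ← evalDiv_intCast (a := a) (b := b) β] at hper
    have hconj := h.conj_sub_gammaBound_le hq.ne' hqb n (mem_periodicPts_of_semiconj
      (h.evalDiv_injective hq.ne') (semiconj_evalDiv_betaStep_betaMap h.sq_eq hq.ne') hper)
      (by rwa [← pow_mul])
    rw [evalDiv_intCast] at hconj
    linarith [le_max_right 0 (gammaBound b c + (c ^ 2) ^ n * (conjMax a c - gammaBound b c))]

theorem gammaBound_eq_one_sub : gammaBound b c = 1 - (b - 1) * b * β / (β ^ 2 - b ^ 2) := by
  have hβ := h.pos.ne'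
  have hc := h.one_sub_sq_pos.ne'
  rw [gammaBound, ← h.mul_eq, show β ^ 2 - (β * c) ^ 2 = β ^ 2 * (1 - c ^ 2) by ring]
  field_simp

end IsQuadraticPisot

theorem gamma_five_add_two_sqrt_seven_general {a b : ℤ} (hb : 1 ≤ b) (hba : b ≤ a)
    (hab : IsCoprime a b) {β : ℝ} (hβ : 0 < β) (hroot : β ^ 2 = a * β + b) :
    sSup {v : ℝ | v ∈ Set.Icc (0 : ℝ) 1 ∧
      ∀ x : ℚ, 0 < x → (x : ℝ) ≤ v → Int.gcd (x.den : ℤ) b = 1 →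
        ∃ ℓ : ℕ, 1 ≤ ℓ ∧ (betaMap β)^[ℓ] (x : ℝ) = (x : ℝ)} =
      max 0 (1 - (b - 1) * b * β / (β ^ 2 - b ^ 2)) := by
  have hmul : β * (β - a) = b := by linear_combination hroot
  have h : IsQuadraticPisot a b β (β - a) := by
    refine ⟨sub_sub_cancel _ _, hmul, pos_of_mul_pos_right ?_ hβ.le, hb, hba⟩
    rw [hmul]
    exact Int.cast_pos.2 hb
  rw [← h.gammaBound_eq_one_sub]
  simp only [← Int.isCoprime_iff_gcd_eq_one]
  have hzero : (0 : ℝ) ∈ {v : ℝ | v ∈ Set.Icc (0 : ℝ) 1 ∧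
      ∀ x : ℚ, 0 < x → (x : ℝ) ≤ v → IsCoprime (x.den : ℤ) b →
        ∃ ℓ : ℕ, 1 ≤ ℓ ∧ (betaMap β)^[ℓ] (x : ℝ) = (x : ℝ)} :=
    ⟨by simp, fun x hx hx₀ => absurd hx (by exact_mod_cast hx₀.not_gt)⟩
  refine csSup_eq_of_forall_le_of_forall_lt_exists_gt ⟨0, hzero⟩ ?_ fun w hw => ?_
  · rintro v ⟨-, hper⟩
    by_contra! hlt
    obtain ⟨x, hx₀, hxv, hxb, hx⟩ := h.exists_ratCast_notMem_periodicPts hab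
      ((le_max_left _ _).trans_lt hlt) ((le_max_right _ _).trans_lt hlt)
    exact hx (hper x hx₀ hxv hxb)
  · obtain hneg | hpos := le_or_gt (gammaBound b (β - a)) 0
    · rw [max_eq_left hneg] at hw
      exact ⟨0, hzero, hw⟩
    rw [max_eq_right hpos.le] at hw
    obtain ⟨v, hwv, hv⟩ := exists_between (max_lt hw hpos)
    refine ⟨v, ⟨⟨(le_max_right _ _).trans hwv.le, hv.le.trans h.gammaBound_le_one⟩,
      fun x hx₀ hxv hxb => ?_⟩, (le_max_left _ _).trans_lt hwv⟩
    exact h.ratCast_mem_periodicPts hx₀.le (hxv.trans_lt hv) hxb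

/-- For `β = 5 + 2√7` (the Pisot root of `X² - 10X - 3`, of norm `-3`), one has
`γ(β) = (7 - √7)/12`: the supremum of the set of `v ∈ [0,1]` such that every rational
`x ∈ (0, v]` whose reduced denominator is coprime to `3` has purely periodic β-expansion. -/
theorem gamma_five_add_two_sqrt_seven :
    sSup {v : ℝ | v ∈ Set.Icc (0 : ℝ) 1 ∧
      ∀ x : ℚ, 0 < x → (x : ℝ) ≤ v → Int.gcd (x.den : ℤ) 3 = 1 →
        ∃ ℓ : ℕ, 1 ≤ ℓ ∧ (betaMap (5 + 2 * Real.sqrt 7))^[ℓ] (x : ℝ) = (x : ℝ)} =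
      (7 - Real.sqrt 7) / 12 := by
  have hsq : √7 ^ 2 = (7 : ℝ) := Real.sq_sqrt (by norm_num)
  have hle : √7 ≤ (7 : ℝ) := Real.sqrt_le_iff.2 (by norm_num)
  have hval : 1 - ((3 : ℤ) - 1) * (3 : ℤ) * (5 + 2 * √7) / ((5 + 2 * √7) ^ 2 - (3 : ℤ) ^ 2) =
      (7 - √7) / 12 := by
    have : (5 + 2 * √7) ^ 2 - ((3 : ℤ) : ℝ) ^ 2 ≠ 0 := by
      push_cast
      nlinarith [Real.sqrt_nonneg 7]
    field_simp
    push_cast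
    linear_combination (4 * √7 + 40) * hsq
  rw [← max_eq_right (div_nonneg (sub_nonneg.2 hle) (by norm_num)), ← hval]
  exact gamma_five_add_two_sqrt_seven_general (a := 10) (by norm_num) (by norm_num)
    ⟨1, -3, by norm_num⟩ (by positivity) (by push_cast; linear_combination 4 * hsq)
end
end

section
/- Let n ≥ 1 be a natural number and let α be a real number with 1/n ≤ α < 1. Then the set X(α, n) = { ∑_{i=0}^∞ a_i α^i : a : ℕ → ℕ with a_i ≤ n − 1 for all i } is exactly the closed interval [0, (n−1)/(1−α)]. Moreover, for any real α with 0 < α < 1 (without the lower bound 1/n), one has X(α, n) ⊆ [0, (n−1)/(1−α)] and both endpoints 0 and (n−1)/(1−α) belong to X(α, n). -/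
/-!
With `M = (n - 1) / (1 - α)`, the inclusion in `[0, M]` and the endpoints come from comparison with
geometric series. For the converse, the condition `1 / n ≤ α` says exactly that `1 ≤ M * α`, so the
translates `d + [0, M * α]` with `0 ≤ d ≤ n - 1` leave no gaps and cover `[0, M]`. Every point of
`[0, M]` is therefore a digit plus `α` times another point of `[0, M]`, and iterating this expands
it as a series in `α`, the remainders being bounded.
-/

noncomputable section

/-- The "cookie cutter" set `X(α, n)`: all sums `∑_{i=0}^∞ a_i α^i` with natural digits
`0 ≤ a_i ≤ n - 1`. -/
def cookieSet (α : ℝ) (n : ℕ) : Set ℝ :=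
  {x : ℝ | ∃ a : ℕ → ℕ, (∀ i, a i ≤ n - 1) ∧ HasSum (fun i => (a i : ℝ) * α ^ i) x}

open Set Filter Topology

lemma hasSum_sub_succ_of_summable_norm {E : Type*} [SeminormedAddCommGroup E] {f : ℕ → E}
    (hf : Summable fun i => ‖f i‖) : HasSum (fun i => f i - f (i + 1)) (f 0) := by
  have summable_sub : Summable fun i => ‖f i - f (i + 1)‖ :=
    .of_nonneg_of_le (fun _ => norm_nonneg _) (fun _ => norm_sub_le _ _)
      (hf.add ((summable_nat_add_iff 1).2 hf))
  rw [hasSum_iff_tendsto_nat_of_summable_norm summable_sub]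
  simp only [Finset.sum_range_sub']
  simpa using (tendsto_zero_iff_norm_tendsto_zero.2 hf.tendsto_atTop_zero).const_sub (f 0)

section NormedRing

variable {R : Type*} [NormedRing R] {x : R}

lemma summable_norm_mul_pow_of_isBounded_range (hx : ‖x‖ < 1) {r : ℕ → R}
    (hr : Bornology.IsBounded (range r)) : Summable fun i => ‖r i * x ^ i‖ := by
  obtain ⟨C, hC⟩ := isBounded_iff_forall_norm_le.1 hr
  refine .of_nonneg_of_le (fun _ => norm_nonneg _) (fun i => ?_)
    ((summable_norm_geometric_of_norm_lt_one hx).mul_left C)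
  exact (norm_mul_le _ _).trans (by gcongr; exact hC _ (mem_range_self i))

lemma hasSum_mul_pow_of_add_mul_eq (hx : ‖x‖ < 1) {a r : ℕ → R}
    (hr : Bornology.IsBounded (range r)) (h : ∀ k, a k + r (k + 1) * x = r k) :
    HasSum (fun i => a i * x ^ i) (r 0) := by
  have term_eq (i : ℕ) : a i * x ^ i = r i * x ^ i - r (i + 1) * x ^ (i + 1) := by
    rw [pow_succ', ← mul_assoc, ← sub_mul, eq_sub_of_add_eq (h i)]
  simpa [term_eq] using
    hasSum_sub_succ_of_summable_norm (summable_norm_mul_pow_of_isBounded_range hx hr)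

lemma exists_hasSum_mul_pow_of_isBounded (hx : ‖x‖ < 1) {ι : Type*} {d : ι → R} {S : Set R}
    (hS : Bornology.IsBounded S) (hcover : ∀ r ∈ S, ∃ j, ∃ s ∈ S, d j + s * x = r)
    {r : R} (hr : r ∈ S) :
    ∃ a : ℕ → ι, HasSum (fun i => d (a i) * x ^ i) r := by
  have step (r : S) : ∃ j, ∃ s : S, d j + s * x = r := by simpa using hcover r r.2
  choose digit next digit_add_next using step
  let remainder (k : ℕ) : S := next^[k] ⟨r, hr⟩
  have remainder_bounded : Bornology.IsBounded (range fun k => (remainder k : R)) :=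
    hS.subset (range_subset_iff.2 fun k => (remainder k).2)
  refine ⟨fun i => digit (remainder i), hasSum_mul_pow_of_add_mul_eq hx remainder_bounded ?_⟩
  intro k
  simpa only [remainder, Function.iterate_succ_apply'] using digit_add_next (remainder k)

end NormedRing

lemma sub_natCast_min_floor_mem_Icc {K : Type*} [Ring K] [LinearOrder K] [IsStrictOrderedRing K]
    [FloorSemiring K] {m : ℕ} {b r : K} (hb : 1 ≤ b) (hr : r ∈ Icc 0 (m + b)) :
    r - (min m ⌊r⌋₊ : ℕ) ∈ Icc 0 b := by
  have floor_le : (⌊r⌋₊ : K) ≤ r := Nat.floor_le hr.1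
  refine ⟨sub_nonneg.2 (le_trans (mod_cast min_le_right _ _) floor_le), ?_⟩
  rcases le_total m ⌊r⌋₊ with hm | hm
  · rw [min_eq_left hm]
    exact sub_le_iff_le_add'.2 hr.2
  · rw [min_eq_right hm]
    exact (sub_le_iff_le_add'.2 (Nat.lt_floor_add_one r).le).trans hb

lemma exists_natCast_add_mul_eq_of_mem_Icc {K : Type*} [Field K] [LinearOrder K]
    [IsStrictOrderedRing K] [FloorSemiring K] {m : ℕ} {α M r : K}
    (hα : 0 < α) (hM : m + M * α = M) (h : 1 ≤ M * α) (hr : r ∈ Icc 0 M) :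
    ∃ d : Iic m, ∃ s ∈ Icc 0 M, (d : ℕ) + s * α = r := by
  rw [← hM] at hr
  obtain ⟨rem_nonneg, rem_le⟩ := sub_natCast_min_floor_mem_Icc h hr
  refine ⟨⟨min m ⌊r⌋₊, mem_Iic.2 (min_le_left _ _)⟩, (r - (min m ⌊r⌋₊ : ℕ)) / α,
    ⟨div_nonneg rem_nonneg hα.le, (div_le_iff₀ hα).2 rem_le⟩, ?_⟩
  rw [div_mul_cancel₀ _ hα.ne', add_sub_cancel]

lemma hasSum_const_mul_geometric_of_norm_lt_one {K : Type*} [NormedDivisionRing K] {x : K}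
    (hx : ‖x‖ < 1) (c : K) : HasSum (fun i => c * x ^ i) (c / (1 - x)) := by
  rw [div_eq_mul_inv]
  exact (hasSum_geometric_of_norm_lt_one hx).mul_left c

section CookieSet

variable {α : ℝ} {n : ℕ}

lemma natCast_div_one_sub_mem_cookieSet (hα : |α| < 1) {d : ℕ} (hd : d ≤ n - 1) :
    d / (1 - α) ∈ cookieSet α n :=
  ⟨fun _ => d, fun _ => hd, hasSum_const_mul_geometric_of_norm_lt_one hα (d : ℝ)⟩

lemma cookieSet_subset_Icc (hα0 : 0 ≤ α) (hα1 : α < 1) :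
    cookieSet α n ⊆ Icc 0 ((n - 1 : ℕ) / (1 - α)) := by
  rintro x ⟨a, ha, hsum⟩
  have hmax := hasSum_const_mul_geometric_of_norm_lt_one
    (by rwa [Real.norm_of_nonneg hα0]) ((n - 1 : ℕ) : ℝ)
  refine ⟨hsum.nonneg fun i => by positivity, hasSum_le (fun i => ?_) hsum hmax⟩
  gcongr
  exact ha i

lemma Icc_subset_cookieSet (hα : α < 1) (h : 1 ≤ n * α) :
    Icc 0 ((n - 1 : ℕ) / (1 - α)) ⊆ cookieSet α n := by
  have α_pos : 0 < α := pos_of_mul_pos_right (one_pos.trans_le h) n.cast_nonneg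
  have n_pos : 0 < n := Nat.pos_of_ne_zero (by rintro rfl; norm_num at h)
  have one_sub_pos : 0 < 1 - α := sub_pos.2 hα
  set M : ℝ := (n - 1 : ℕ) / (1 - α) with M_def
  have M_eq : (n - 1 : ℕ) + M * α = M := by
    rw [M_def]
    field_simp
    ring
  have one_le : 1 ≤ M * α := by
    rw [M_def, div_mul_eq_mul_div, one_le_div one_sub_pos, Nat.cast_pred n_pos]
    linarith
  intro x hx
  obtain ⟨a, ha⟩ := exists_hasSum_mul_pow_of_isBounded
    (by rwa [Real.norm_of_nonneg α_pos.le]) (Metric.isBounded_Icc 0 M)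
    (fun r hr => exists_natCast_add_mul_eq_of_mem_Icc α_pos M_eq one_le hr) hx
  exact ⟨fun i => a i, fun i => (a i).2, ha⟩

end CookieSet

/-- Cookie Cantor Lemma: for `0 < α < 1` and `n ≥ 1`, the set `X(α, n)` is contained in
`[0, (n-1)/(1-α)]` and contains both endpoints; and if moreover `1/n ≤ α`, then
`X(α, n)` is exactly the interval `[0, (n-1)/(1-α)]`. -/
theorem cookie_cantor (n : ℕ) (hn : 1 ≤ n) (α : ℝ) (hα0 : 0 < α) (hα1 : α < 1) :
    (cookieSet α n ⊆ Set.Icc 0 (((n : ℝ) - 1) / (1 - α)) ∧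
      (0 : ℝ) ∈ cookieSet α n ∧ ((n : ℝ) - 1) / (1 - α) ∈ cookieSet α n) ∧
    (1 / (n : ℝ) ≤ α → cookieSet α n = Set.Icc 0 (((n : ℝ) - 1) / (1 - α))) := by
  have abs_lt_one : |α| < 1 := by rwa [abs_of_pos hα0]
  have subset_Icc : cookieSet α n ⊆ Icc 0 ((n - 1 : ℕ) / (1 - α)) :=
    cookieSet_subset_Icc hα0.le hα1
  have zero_mem : (0 : ℝ) ∈ cookieSet α n := by
    simpa using natCast_div_one_sub_mem_cookieSet abs_lt_one (Nat.zero_le (n - 1))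
  have max_mem : ((n - 1 : ℕ) : ℝ) / (1 - α) ∈ cookieSet α n :=
    natCast_div_one_sub_mem_cookieSet abs_lt_one le_rfl
  rw [← Nat.cast_pred hn]
  refine ⟨⟨subset_Icc, zero_mem, max_mem⟩, fun h => subset_Icc.antisymm ?_⟩
  exact Icc_subset_cookieSet hα1 ((div_le_iff₀' (by exact_mod_cast hn)).1 h)
end
end

section
/- Let α = √7 − 2. Then the set { ∑_{i=0}^∞ a_i α^{2i} − ∑_{i=0}^∞ b_i α^{2i+1} : a : ℕ → {0,1,2}, b : ℕ → {2,3,4} } is exactly the closed interval [ −4α/(1−α²), (2 − 2α)/(1−α²) ]; in particular this set contains 0. -/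
/-!
Put `c (2 i) = a i` and `c (2 i + 1) = 4 - b i`. Then `∑ a_i α^(2i) - ∑ b_i α^(2i+1)` is the
expansion `∑ c_n α^n` with digits `c_n ∈ {0, 1, 2}`, translated by `-4α/(1-α²)`. Such expansions
fill `[0, 2/(1-α)]`: as `1 ≤ 3α`, this interval is the union of its images under `y ↦ c + α y`,
`c = 0, 1, 2`, so the greedy algorithm never leaves it and expands each of its points.
-/

noncomputable section

/-- The first digit of `y` in the greedy expansion with digits `0, …, d`: the largest digit that
is at most `y`. For `y < 0` it is `0`. -/
def greedyDigit (d : ℕ) (y : ℝ) : ℕ := min d ⌊y⌋₊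

/-- The remainders of the greedy expansion `y = ∑ c_n α^n` with digits `0, …, d`, rescaled so that
the `n`-th one is the number that remains to be expanded from the digit `c_n` on. -/
def greedyRemainder (α : ℝ) (d : ℕ) (y : ℝ) : ℕ → ℝ
  | 0 => y
  | n + 1 => (greedyRemainder α d y n - greedyDigit d (greedyRemainder α d y n)) / α

section DigitExpansions

variable {α y : ℝ} {d : ℕ}

lemma greedyDigit_le (d : ℕ) (y : ℝ) : greedyDigit d y ≤ d :=
  min_le_left _ _

lemma greedyDigit_le_self (d : ℕ) (hy : 0 ≤ y) : (greedyDigit d y : ℝ) ≤ y :=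
  (Nat.cast_le.2 (min_le_right _ _)).trans (Nat.floor_le hy)

lemma sub_greedyDigit_le (d : ℕ) (y : ℝ) : y - greedyDigit d y ≤ max 1 (y - d) := by
  rcases min_choice d ⌊y⌋₊ with h | h <;> rw [greedyDigit, h]
  · exact le_max_right _ _
  · exact le_max_of_le_left (by linarith [Nat.lt_floor_add_one y])

lemma pos_of_one_le_succ_mul (hd : 1 ≤ (d + 1) * α) : 0 < α :=
  pos_of_mul_pos_right (one_pos.trans_le hd) (by positivity)

lemma sub_greedyDigit_div_mem_Icc (hd : 1 ≤ (d + 1) * α) (h1 : α < 1)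
    (hy : y ∈ Set.Icc 0 (d / (1 - α))) :
    (y - greedyDigit d y) / α ∈ Set.Icc 0 (d / (1 - α)) := by
  have h0 : 0 < α := pos_of_one_le_succ_mul hd
  have hden : 0 < 1 - α := sub_pos.2 h1
  have one_le : 1 ≤ d / (1 - α) * α := by
    rw [div_mul_eq_mul_div, le_div_iff₀ hden]
    linarith
  have sub_le : y - d ≤ d / (1 - α) * α := by
    have : d / (1 - α) - d = d / (1 - α) * α := by
      field_simp
      ring
    linarith [hy.2]
  exact ⟨div_nonneg (sub_nonneg.2 (greedyDigit_le_self d hy.1)) h0.le,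
    (div_le_iff₀ h0).2 ((sub_greedyDigit_le d y).trans (max_le one_le sub_le))⟩

lemma greedyRemainder_mem_Icc (hd : 1 ≤ (d + 1) * α) (h1 : α < 1)
    (hy : y ∈ Set.Icc 0 (d / (1 - α))) (n : ℕ) :
    greedyRemainder α d y n ∈ Set.Icc 0 (d / (1 - α)) := by
  induction n with
  | zero => exact hy
  | succ n ih => exact sub_greedyDigit_div_mem_Icc hd h1 ih

lemma sum_range_greedyDigit_mul_pow (h0 : α ≠ 0) (d : ℕ) (y : ℝ) (n : ℕ) :
    ∑ i ∈ Finset.range n, (greedyDigit d (greedyRemainder α d y i) : ℝ) * α ^ i =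
      y - greedyRemainder α d y n * α ^ n := by
  induction n with
  | zero => simp [greedyRemainder]
  | succ n ih =>
    rw [Finset.sum_range_succ, ih, greedyRemainder]
    field_simp
    ring

lemma tendsto_greedyRemainder_mul_pow (hd : 1 ≤ (d + 1) * α) (h1 : α < 1)
    (hy : y ∈ Set.Icc 0 (d / (1 - α))) :
    Filter.Tendsto (fun n ↦ greedyRemainder α d y n * α ^ n) Filter.atTop (nhds 0) := by
  have h0 : 0 < α := pos_of_one_le_succ_mul hd
  have hmem := greedyRemainder_mem_Icc hd h1 hy
  have hpow := (tendsto_pow_atTop_nhds_zero_of_lt_one h0.le h1).const_mul (d / (1 - α))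
  rw [mul_zero] at hpow
  exact squeeze_zero (fun n ↦ mul_nonneg (hmem n).1 (by positivity))
    (fun n ↦ mul_le_mul_of_nonneg_right (hmem n).2 (by positivity)) hpow

lemma hasSum_greedyDigit_mul_pow (hd : 1 ≤ (d + 1) * α) (h1 : α < 1)
    (hy : y ∈ Set.Icc 0 (d / (1 - α))) :
    HasSum (fun n ↦ (greedyDigit d (greedyRemainder α d y n) : ℝ) * α ^ n) y := by
  have h0 : 0 < α := pos_of_one_le_succ_mul hd
  rw [hasSum_iff_tendsto_nat_of_nonneg (fun n ↦ by positivity)]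
  simp_rw [sum_range_greedyDigit_mul_pow h0.ne']
  simpa only [sub_zero] using (tendsto_greedyRemainder_mul_pow hd h1 hy).const_sub y

lemma hasSum_const_mul_pow (h0 : 0 ≤ α) (h1 : α < 1) (k : ℝ) :
    HasSum (fun n ↦ k * α ^ n) (k / (1 - α)) := by
  simpa only [div_eq_mul_inv] using (hasSum_geometric_of_lt_one h0 h1).mul_left k

lemma summable_digit_mul_pow (h0 : 0 ≤ α) (h1 : α < 1) {c : ℕ → ℕ} (hc : ∀ n, c n ≤ d) :
    Summable fun n ↦ (c n : ℝ) * α ^ n :=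
  (hasSum_const_mul_pow h0 h1 d).summable.of_nonneg_of_le (fun n ↦ by positivity)
    fun n ↦ mul_le_mul_of_nonneg_right (Nat.cast_le.2 (hc n)) (by positivity)

lemma tsum_digit_mul_pow_mem_Icc (h0 : 0 ≤ α) (h1 : α < 1) {c : ℕ → ℕ} (hc : ∀ n, c n ≤ d) :
    ∑' n, (c n : ℝ) * α ^ n ∈ Set.Icc 0 (d / (1 - α)) :=
  ⟨tsum_nonneg fun n ↦ by positivity,
    hasSum_le (fun n ↦ mul_le_mul_of_nonneg_right (Nat.cast_le.2 (hc n)) (by positivity))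
      (summable_digit_mul_pow h0 h1 hc).hasSum (hasSum_const_mul_pow h0 h1 d)⟩

lemma setOf_tsum_digit_mul_pow_eq_Icc (hd : 1 ≤ (d + 1) * α) (h1 : α < 1) :
    {y : ℝ | ∃ c : ℕ → ℕ, (∀ n, c n ≤ d) ∧ y = ∑' n, (c n : ℝ) * α ^ n} =
      Set.Icc 0 (d / (1 - α)) := by
  refine Set.Subset.antisymm ?_ fun y hy ↦
    ⟨_, fun n ↦ greedyDigit_le d _, (hasSum_greedyDigit_mul_pow hd h1 hy).tsum_eq.symm⟩
  rintro _ ⟨c, hc, rfl⟩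
  exact tsum_digit_mul_pow_mem_Icc (pos_of_one_le_succ_mul hd).le h1 hc

end DigitExpansions

section AlternatingExpansions

variable {α : ℝ} {d m M : ℕ}

lemma hasSum_const_mul_odd_pow (h0 : 0 ≤ α) (h1 : α < 1) (k : ℝ) :
    HasSum (fun i ↦ k * α ^ (2 * i + 1)) (k * α / (1 - α ^ 2)) := by
  convert hasSum_const_mul_pow (sq_nonneg α) (pow_lt_one₀ h0 h1 two_ne_zero) (k * α) using 2 with i
  ring

lemma tsum_even_sub_tsum_odd_reflected (h0 : 0 ≤ α) (h1 : α < 1) {a b c : ℕ → ℕ}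
    (hc : ∀ n, c n ≤ d) (ha : ∀ i, c (2 * i) = a i) (hb : ∀ i, c (2 * i + 1) + b i = M) :
    (∑' i, (a i : ℝ) * α ^ (2 * i)) - ∑' i, (b i : ℝ) * α ^ (2 * i + 1) =
      (∑' n, (c n : ℝ) * α ^ n) - M * α / (1 - α ^ 2) := by
  have hsum := summable_digit_mul_pow h0 h1 hc
  have double_injective : Function.Injective fun i : ℕ ↦ 2 * i :=
    mul_right_injective₀ two_ne_zero
  have double_succ_injective : Function.Injective fun i : ℕ ↦ 2 * i + 1 :=
    (add_left_injective 1).comp double_injective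
  have heven : Summable fun i ↦ (c (2 * i) : ℝ) * α ^ (2 * i) :=
    hsum.comp_injective double_injective
  have hodd : Summable fun i ↦ (c (2 * i + 1) : ℝ) * α ^ (2 * i + 1) :=
    hsum.comp_injective double_succ_injective
  have hreflect : ∑' i, (b i : ℝ) * α ^ (2 * i + 1) =
      M * α / (1 - α ^ 2) - ∑' i, (c (2 * i + 1) : ℝ) * α ^ (2 * i + 1) := by
    rw [← ((hasSum_const_mul_odd_pow h0 h1 M).sub hodd.hasSum).tsum_eq]
    refine tsum_congr fun i ↦ ?_
    rw [← hb i]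
    push_cast
    ring
  rw [hreflect, ← tsum_even_add_odd (f := fun n ↦ (c n : ℝ) * α ^ n) heven hodd]
  simp_rw [ha]
  ring

lemma setOf_tsum_even_sub_tsum_odd_eq_image (h0 : 0 ≤ α) (h1 : α < 1) (hM : M = m + d) :
    {x : ℝ | ∃ a b : ℕ → ℕ, (∀ i, a i ≤ d) ∧ (∀ i, m ≤ b i ∧ b i ≤ M) ∧
        x = (∑' i, (a i : ℝ) * α ^ (2 * i)) - ∑' i, (b i : ℝ) * α ^ (2 * i + 1)} =
      (· - M * α / (1 - α ^ 2)) ''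
        {y : ℝ | ∃ c : ℕ → ℕ, (∀ n, c n ≤ d) ∧ y = ∑' n, (c n : ℝ) * α ^ n} := by
  apply Set.Subset.antisymm
  · rintro _ ⟨a, b, ha, hb, rfl⟩
    let c : ℕ → ℕ := fun n ↦ if Even n then a (n / 2) else M - b (n / 2)
    have hc (n : ℕ) : c n ≤ d := by
      have := ha (n / 2)
      have := hb (n / 2)
      grind
    have hca (i : ℕ) : c (2 * i) = a i := by simp [c]
    have hcb (i : ℕ) : c (2 * i + 1) + b i = M := by
      have := hb i
      grind
    exact ⟨_, ⟨c, hc, rfl⟩, (tsum_even_sub_tsum_odd_reflected h0 h1 hc hca hcb).symm⟩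
  · rintro _ ⟨_, ⟨c, hc, rfl⟩, rfl⟩
    have hcM (n : ℕ) : c n ≤ M := (hc n).trans (by omega)
    refine ⟨fun i ↦ c (2 * i), fun i ↦ M - c (2 * i + 1), fun i ↦ hc _, fun i ↦ ?_,
      (tsum_even_sub_tsum_odd_reflected h0 h1 hc (fun _ ↦ rfl) fun i ↦
        Nat.add_sub_of_le (hcM _)).symm⟩
    have := hc (2 * i + 1)
    grind

theorem digit_sum_set_eq_Icc_general (hd : 1 ≤ (d + 1) * α) (h1 : α < 1) (hM : M = m + d) :
    ({x : ℝ | ∃ a b : ℕ → ℕ, (∀ i, a i ≤ d) ∧ (∀ i, m ≤ b i ∧ b i ≤ M) ∧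
        x = (∑' i : ℕ, (a i : ℝ) * α ^ (2 * i)) - ∑' i : ℕ, (b i : ℝ) * α ^ (2 * i + 1)} =
      Set.Icc (-(M * α) / (1 - α ^ 2)) ((d - m * α) / (1 - α ^ 2))) ∧
    ((0 : ℝ) ∈ {x : ℝ | ∃ a b : ℕ → ℕ, (∀ i, a i ≤ d) ∧ (∀ i, m ≤ b i ∧ b i ≤ M) ∧
        x = (∑' i : ℕ, (a i : ℝ) * α ^ (2 * i)) - ∑' i : ℕ, (b i : ℝ) * α ^ (2 * i + 1)} ↔
      m * α ≤ d) := by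
  have h0 : 0 < α := pos_of_one_le_succ_mul hd
  have hden : 0 < 1 - α ^ 2 := sub_pos.2 (pow_lt_one₀ h0.le h1 two_ne_zero)
  have hleft : 0 - M * α / (1 - α ^ 2) = -(M * α) / (1 - α ^ 2) := by ring
  have hright : d / (1 - α) - M * α / (1 - α ^ 2) = (d - m * α) / (1 - α ^ 2) := by
    have : 1 - α ≠ 0 := (sub_pos.2 h1).ne'
    rw [hM, eq_div_iff hden.ne', sub_mul, div_mul_cancel₀ _ hden.ne']
    field_simp
    push_cast
    ring
  have hset := setOf_tsum_even_sub_tsum_odd_eq_image h0.le h1 hM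
  rw [setOf_tsum_digit_mul_pow_eq_Icc hd h1, Set.image_sub_const_Icc, hleft, hright] at hset
  refine ⟨hset, ?_⟩
  have hleft_nonpos : -(M * α) / (1 - α ^ 2) ≤ 0 :=
    div_nonpos_of_nonpos_of_nonneg (neg_nonpos.2 (by positivity)) hden.le
  rw [hset, Set.mem_Icc, and_iff_right hleft_nonpos, le_div_iff₀ hden, zero_mul, sub_nonneg]

end AlternatingExpansions

/-- For `α = √7 - 2`, the set of numbers `∑ a_i α^(2i) - ∑ b_i α^(2i+1)` with digits
`a_i ∈ {0,1,2}` and `b_i ∈ {2,3,4}` is exactly the closed interval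
`[-4α/(1-α²), (2-2α)/(1-α²)]`; in particular it contains `0`. -/
theorem digit_sum_set_eq_Icc :
    ({x : ℝ | ∃ a b : ℕ → ℕ, (∀ i, a i ≤ 2) ∧ (∀ i, 2 ≤ b i ∧ b i ≤ 4) ∧
        x = (∑' i : ℕ, (a i : ℝ) * (Real.sqrt 7 - 2) ^ (2 * i)) -
            ∑' i : ℕ, (b i : ℝ) * (Real.sqrt 7 - 2) ^ (2 * i + 1)} =
      Set.Icc (-(4 * (Real.sqrt 7 - 2)) / (1 - (Real.sqrt 7 - 2) ^ 2))
        ((2 - 2 * (Real.sqrt 7 - 2)) / (1 - (Real.sqrt 7 - 2) ^ 2))) ∧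
    (0 : ℝ) ∈ {x : ℝ | ∃ a b : ℕ → ℕ, (∀ i, a i ≤ 2) ∧ (∀ i, 2 ≤ b i ∧ b i ≤ 4) ∧
        x = (∑' i : ℕ, (a i : ℝ) * (Real.sqrt 7 - 2) ^ (2 * i)) -
            ∑' i : ℕ, (b i : ℝ) * (Real.sqrt 7 - 2) ^ (2 * i + 1)} := by
  have hlo : 7 / 3 < Real.sqrt 7 := Real.lt_sqrt_of_sq_lt (by norm_num)
  have hhi : Real.sqrt 7 < 3 := (Real.sqrt_lt' (by norm_num)).2 (by norm_num)
  have h := digit_sum_set_eq_Icc_general (α := Real.sqrt 7 - 2) (d := 2) (m := 2)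
    (by push_cast; linarith) (by linarith) rfl
  simp only [Nat.cast_ofNat] at h
  exact ⟨h.1, h.2.2 (by linarith)⟩
end
end
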